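/- arXiv:math/0506117 — 4 statements merged into one kernel-verified Lean document; each statement's English description precedes it below -/
import Mathlib

section
/- Let m ≥ 1 and let k₁,…,k_m be positive integers. For every complex number z with |z| < 1, the family z^{n_m}/(n₁^{k₁}·…·n_m^{k_m}), indexed by m-tuples of positive integers with 0 < n₁ < ⋯ < n_m, is summable in ℂ, and the resulting function z ↦ Li_{k₁,…,k_m}(z) is holomorphic (complex differentiable) on the open unit disc {z ∈ ℂ : |z| < 1}. -/
/-- Index type for multiple polylogarithm sums: strictly increasing tuples of
positive integers `0 < n₁ < ⋯ < n_{m+1}`. -/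
def MPLIdx (m : ℕ) : Type :=
  {f : Fin (m + 1) → ℕ // StrictMono f ∧ ∀ i, 0 < f i}

/-- The one-variable multiple polylogarithm
`Li_{k₁,…,k_{m+1}}(z) = Σ_{0<n₁<⋯<n_{m+1}} z^{n_{m+1}}/(n₁^{k₁}⋯n_{m+1}^{k_{m+1}})`. -/
noncomputable def MPL (m : ℕ) (k : Fin (m + 1) → ℕ) (z : ℂ) : ℂ :=
  ∑' n : MPLIdx m, z ^ (n.1 (Fin.last m)) / ∏ i, ((n.1 i : ℂ)) ^ k i

theorem mpl_aux_prod (s : ℝ) (h0 : 0 ≤ s) (h1 : s < 1) (m : ℕ) :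
    Summable (fun f : Fin m → ℕ => ∏ i, s ^ f i) := by
  induction m with
  | zero => exact Summable.of_finite
  | succ m ih =>
    have h := (summable_geometric_of_lt_one h0 h1).mul_of_nonneg ih
      (fun n => pow_nonneg h0 n) (fun f => Finset.prod_nonneg fun i _ => pow_nonneg h0 _)
    rw [← (Fin.consEquiv (fun _ : Fin (m + 1) => ℕ)).summable_iff]
    refine h.congr fun x => ?_
    simp [Fin.prod_univ_succ, Fin.consEquiv]

theorem mpl_aux_last (r : ℝ) (h0 : 0 ≤ r) (h1 : r < 1) (m : ℕ) :
    Summable (fun n : MPLIdx m => r ^ (n.1 (Fin.last m))) := by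
  obtain ⟨s, hs0, hs1, hs⟩ : ∃ s : ℝ, 0 ≤ s ∧ s < 1 ∧ s ^ (m + 1) = r :=
    ⟨r ^ (((m + 1 : ℕ) : ℝ)⁻¹), Real.rpow_nonneg h0 _,
      Real.rpow_lt_one h0 h1 (by positivity), Real.rpow_inv_natCast_pow h0 (by omega)⟩
  have hS := (mpl_aux_prod s hs0 hs1 (m + 1)).comp_injective
    (i := fun n : MPLIdx m => n.1) Subtype.val_injective
  refine Summable.of_nonneg_of_le (fun n => pow_nonneg h0 _) (fun n => ?_) hS
  have : r ^ (n.1 (Fin.last m)) = ∏ _i : Fin (m + 1), s ^ (n.1 (Fin.last m)) := by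
    simp [← hs, ← pow_mul, mul_comm]
  rw [this]
  refine Finset.prod_le_prod (fun i _ => pow_nonneg hs0 _) fun i _ => ?_
  exact pow_le_pow_of_le_one hs0 hs1.le (n.2.1.monotone (Fin.le_last i))

theorem mpl_aux_norm (m : ℕ) (k : Fin (m + 1) → ℕ) (n : MPLIdx m) (z : ℂ) (r : ℝ)
    (hz : ‖z‖ ≤ r) :
    ‖z ^ (n.1 (Fin.last m)) / ∏ i, ((n.1 i : ℂ)) ^ k i‖ ≤ r ^ (n.1 (Fin.last m)) := by
  rw [norm_div, norm_pow, norm_prod]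
  have h1 : 1 ≤ ∏ i, ‖((n.1 i : ℂ)) ^ k i‖ := by
    refine Finset.prod_induction _ (fun x : ℝ => 1 ≤ x)
      (fun a b ha hb => one_le_mul_of_one_le_of_one_le ha hb) le_rfl fun i _ => ?_
    rw [norm_pow, Complex.norm_natCast]
    have hi : (1 : ℝ) ≤ (n.1 i : ℝ) := Nat.one_le_cast.mpr (n.2.2 i)
    exact one_le_pow₀ hi
  exact (div_le_self (by positivity) h1).trans (pow_le_pow_left₀ (norm_nonneg _) hz _)

/-- for positive integers `k₁,…,k_{m+1}` and `|z| < 1`, the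
defining family of the multiple polylogarithm is summable in `ℂ`, and the
resulting function `z ↦ Li_{k₁,…,k_{m+1}}(z)` is holomorphic on the open unit
disc. -/
theorem mpl_summable_and_holomorphic (m : ℕ) (k : Fin (m + 1) → ℕ)
    (hk : ∀ i, 1 ≤ k i) :
    (∀ z : ℂ, ‖z‖ < 1 →
      Summable (fun n : MPLIdx m =>
        z ^ (n.1 (Fin.last m)) / ∏ i, ((n.1 i : ℂ)) ^ k i)) ∧
    DifferentiableOn ℂ (MPL m k) {z : ℂ | ‖z‖ < 1} := by
  constructor
  · intro z hz
    exact Summable.of_norm_bounded (mpl_aux_last ‖z‖ (norm_nonneg _) hz m)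
      fun n => mpl_aux_norm m k n z _ le_rfl
  · intro z hz
    obtain ⟨r, hzr, hr1⟩ := exists_between (show ‖z‖ < 1 from hz)
    have ho : IsOpen {w : ℂ | ‖w‖ < r} := isOpen_lt continuous_norm continuous_const
    have hD : DifferentiableOn ℂ (fun w : ℂ => ∑' n : MPLIdx m,
        w ^ (n.1 (Fin.last m)) / ∏ i, ((n.1 i : ℂ)) ^ k i) {w : ℂ | ‖w‖ < r} := by
      refine Complex.differentiableOn_tsum_of_summable_norm
        (mpl_aux_last r ((norm_nonneg z).trans hzr.le) hr1 m) (fun n => ?_) ho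
        fun n w hw => mpl_aux_norm m k n w r (le_of_lt hw)
      exact ((differentiable_id.pow _).div_const _).differentiableOn
    exact (hD.differentiableAt (ho.mem_nhds hzr)).differentiableWithinAt
end

section
/- Let m ≥ 2 and let k₁,…,k_{m−1} be positive integers. Then for every complex z with |z| < 1, the multiple polylogarithm with last index 1 satisfies d/dz Li_{k₁,…,k_{m−1},1}(z) = (1/(1−z)) · Li_{k₁,…,k_{m−1}}(z), i.e. the function z ↦ Li_{k₁,…,k_{m−1},1}(z) has derivative Li_{k₁,…,k_{m−1}}(z)/(1−z) at every z in the open unit disc. -/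
/-- Splitting off the last entry of a strictly increasing tuple. -/
def mplEquiv (m : ℕ) : MPLIdx m × ℕ ≃ MPLIdx (m + 1) where
  toFun p := ⟨Fin.snoc (α := fun _ => ℕ) p.1.1 (p.1.1 (Fin.last m) + p.2 + 1), by
    constructor
    · rw [Fin.strictMono_iff_lt_succ]
      intro i
      refine Fin.lastCases ?_ (fun i => ?_) i
      · rw [Fin.succ_last, Fin.snoc_last, Fin.snoc_castSucc]
        omega
      · rw [Fin.succ_castSucc, Fin.snoc_castSucc, Fin.snoc_castSucc]
        exact p.1.2.1 (Fin.castSucc_lt_succ)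
    · intro i
      refine Fin.lastCases ?_ (fun i => ?_) i
      · rw [Fin.snoc_last]; omega
      · rw [Fin.snoc_castSucc]; exact p.1.2.2 i⟩
  invFun n := (⟨fun i => n.1 i.castSucc,
      fun _ _ h => n.2.1 (Fin.castSucc_lt_castSucc_iff.2 h), fun i => n.2.2 _⟩,
    n.1 (Fin.last (m + 1)) - n.1 (Fin.last m).castSucc - 1)
  left_inv p := by
    obtain ⟨⟨f, hf⟩, j⟩ := p
    refine Prod.ext (Subtype.ext ?_) ?_
    · funext i
      simp
    · simp only [Fin.snoc_last, Fin.snoc_castSucc]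
      omega
  right_inv n := by
    apply Subtype.ext
    funext i
    refine Fin.lastCases ?_ (fun i => ?_) i
    · simp only [Fin.snoc_last]
      have : n.1 (Fin.last m).castSucc < n.1 (Fin.last (m + 1)) := n.2.1 (Fin.castSucc_lt_last _)
      omega
    · simp only [Fin.snoc_castSucc]

lemma mplEquiv_last (m : ℕ) (p : MPLIdx m × ℕ) :
    (mplEquiv m p).1 (Fin.last (m + 1)) = p.1.1 (Fin.last m) + p.2 + 1 :=
  Fin.snoc_last (α := fun _ => ℕ) _ _

lemma mplEquiv_castSucc (m : ℕ) (p : MPLIdx m × ℕ) (i : Fin (m + 1)) :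
    (mplEquiv m p).1 i.castSucc = p.1.1 i :=
  Fin.snoc_castSucc (α := fun _ => ℕ) _ _ _

lemma mpl_summable_pow (r : ℝ) (h0 : 0 ≤ r) (h1 : r < 1) (m : ℕ) :
    Summable fun n : MPLIdx m => r ^ (n.1 (Fin.last m)) := by
  induction m with
  | zero =>
    refine (summable_geometric_of_lt_one h0 h1).comp_injective
      (i := fun n : MPLIdx 0 => n.1 (Fin.last 0)) ?_
    intro a b h
    apply Subtype.ext
    funext i
    have hi : i = Fin.last 0 := by
      apply Fin.ext
      have := i.isLt
      simp only [Fin.val_last]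
      omega
    rw [hi]
    exact h
  | succ m ih =>
    rw [← (mplEquiv m).summable_iff]
    have hg := (summable_geometric_of_lt_one h0 h1).mul_left r
    refine (ih.mul_of_nonneg hg (fun _ => by positivity) (fun _ => by positivity)).congr ?_
    intro p
    simp only [Function.comp_apply, mplEquiv_last]
    ring

lemma mpl_one_le_norm_prod (m : ℕ) (k : Fin (m + 1) → ℕ) (n : MPLIdx m) :
    1 ≤ ‖∏ i, ((n.1 i : ℂ)) ^ k i‖ := by
  have : ∏ i, ((n.1 i : ℂ)) ^ k i = ((∏ i, (n.1 i) ^ k i : ℕ) : ℂ) := by push_cast; rfl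
  rw [this, Complex.norm_natCast]
  have : 0 < ∏ i, (n.1 i) ^ k i := Finset.prod_pos fun i _ => pow_pos (n.2.2 i) _
  exact_mod_cast this

theorem mpl_hasDerivAt_of_last_eq_one (m : ℕ) (k : Fin (m + 1) → ℕ)
    (hk : ∀ i, 1 ≤ k i) :
    ∀ z : ℂ, ‖z‖ < 1 →
      HasDerivAt (MPL (m + 1) (Fin.snoc k 1)) (MPL m k z / (1 - z)) z := by
  intro z hz
  obtain ⟨r, hzr, hr1⟩ := exists_between hz
  have hr0 : 0 ≤ r := (norm_nonneg z).trans hzr.le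
  set P : MPLIdx m → ℂ := fun n => ∏ i, ((n.1 i : ℂ)) ^ k i with hP
  have hP1 : ∀ n, 1 ≤ ‖P n‖ := mpl_one_le_norm_prod m k
  have hb : ∀ (n : MPLIdx m) (w : ℂ), ‖w‖ ≤ r →
      ‖w ^ n.1 (Fin.last m) / P n‖ ≤ r ^ n.1 (Fin.last m) := by
    intro n w hw
    rw [norm_div, norm_pow]
    exact (div_le_self (by positivity) (hP1 n)).trans (pow_le_pow_left₀ (norm_nonneg _) hw _)
  have hsum : ∀ w : ℂ, ‖w‖ ≤ r → Summable fun n : MPLIdx m => ‖w ^ n.1 (Fin.last m) / P n‖ :=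
    fun w hw => Summable.of_nonneg_of_le (fun _ => norm_nonneg _) (fun n => hb n w hw)
      (mpl_summable_pow r hr0 hr1 m)
  have hfun : MPL (m + 1) (Fin.snoc k 1) = fun w => ∑' p : MPLIdx m × ℕ,
      w ^ (p.1.1 (Fin.last m) + p.2 + 1) / (P p.1 * ((p.1.1 (Fin.last m) + p.2 + 1 : ℕ) : ℂ)) := by
    funext w
    unfold MPL
    rw [← (mplEquiv m).tsum_eq]
    refine tsum_congr fun p => ?_
    rw [Fin.prod_univ_castSucc]
    simp only [mplEquiv_last, mplEquiv_castSucc, Fin.snoc_castSucc, Fin.snoc_last, pow_one, hP]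
  have hval : MPL m k z / (1 - z) =
      ∑' p : MPLIdx m × ℕ, z ^ p.1.1 (Fin.last m) / P p.1 * z ^ p.2 := by
    rw [← tsum_mul_tsum_of_summable_norm (hsum z hzr.le) (summable_norm_geometric_of_norm_lt_one hz),
      tsum_geometric_of_norm_lt_one hz, div_eq_mul_inv]
    rfl
  rw [hfun, hval]
  have hu : Summable fun p : MPLIdx m × ℕ => r ^ p.1.1 (Fin.last m) * r ^ p.2 :=
    (mpl_summable_pow r hr0 hr1 m).mul_of_nonneg (summable_geometric_of_lt_one hr0 hr1)
      (fun _ => by positivity) (fun _ => by positivity)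
  refine hasDerivAt_tsum_of_isPreconnected (t := Metric.ball (0 : ℂ) r) (y₀ := 0)
    (g := fun (p : MPLIdx m × ℕ) (w : ℂ) => w ^ (p.1.1 (Fin.last m) + p.2 + 1) /
      (P p.1 * ((p.1.1 (Fin.last m) + p.2 + 1 : ℕ) : ℂ)))
    (g' := fun p w => w ^ p.1.1 (Fin.last m) / P p.1 * w ^ p.2) hu Metric.isOpen_ball
    (convex_ball _ _).isPreconnected ?_ ?_ ?_ ?_ ?_
  · intro p w _
    have h := (hasDerivAt_pow (p.1.1 (Fin.last m) + p.2 + 1) w).div_const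
      (P p.1 * ((p.1.1 (Fin.last m) + p.2 + 1 : ℕ) : ℂ))
    have h1 : ((p.1.1 (Fin.last m) + p.2 + 1 : ℕ) : ℂ) ≠ 0 := by
      rw [Nat.cast_ne_zero]
      omega
    have h2 : P p.1 ≠ 0 := by
      intro h
      have := hP1 p.1
      rw [h, norm_zero] at this
      linarith
    refine h.congr_deriv ?_
    rw [Nat.add_sub_cancel, pow_add]
    field_simp
  · intro p w hw
    have hw' : ‖w‖ ≤ r := by simpa using (Metric.mem_ball.1 hw).le
    rw [norm_mul, norm_pow]
    exact mul_le_mul (hb _ _ hw') (pow_le_pow_left₀ (norm_nonneg _) hw' _) (by positivity)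
      (by positivity)
  · simpa using (norm_nonneg z).trans_lt hzr
  · simp
  · simpa using hzr
end

section
/- Let k₁, k₂ be integers with k₁ ≥ 2 and k₂ ≥ 2. Then the integral shuffle product formula (Euler decomposition) holds: ζ(k₁)·ζ(k₂) = Σ_{i=0}^{k₁−1} C(k₂−1+i, i)·ζ(k₁−i, k₂+i) + Σ_{j=0}^{k₂−1} C(k₁−1+j, j)·ζ(k₂−j, k₁+j), where C(·,·) denotes the binomial coefficient. -/
/-- The single zeta value `ζ(k) = Σ_{n≥1} 1/n^k`. -/
noncomputable def zeta1 (k : ℕ) : ℝ :=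
  ∑' n : ℕ+, ((n : ℝ) ^ k)⁻¹

/-- The double zeta value `ζ(a,b) = Σ_{0<n₁<n₂} 1/(n₁^a n₂^b)`. -/
noncomputable def zeta2 (a b : ℕ) : ℝ :=
  ∑' q : {q : ℕ+ × ℕ+ // q.1 < q.2}, ((q.1.1 : ℝ) ^ a * (q.1.2 : ℝ) ^ b)⁻¹

noncomputable def shT (x z : ℝ) (a b : ℕ) : ℝ :=
  ∑ i ∈ Finset.range a, (Nat.choose (b + i) i : ℝ) * (x ^ (a - i) * z ^ (b + 1 + i))

lemma shT_zero (x z : ℝ) (b : ℕ) : shT x z 0 b = 0 := by simp [shT]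

lemma shT_succ_zero (x z : ℝ) (a : ℕ) :
    shT x z (a + 1) 0 = z * x ^ (a + 1) + z * shT x z a 0 := by
  unfold shT
  rw [Finset.sum_range_succ', Finset.mul_sum, add_comm]
  congr 1
  · simp; ring
  · refine Finset.sum_congr rfl fun i _ => ?_
    simp only [zero_add, Nat.choose_self, Nat.add_sub_add_right]
    ring

lemma shT_succ_succ (x z : ℝ) (a b : ℕ) :
    shT x z (a + 1) (b + 1) = z * shT x z a (b + 1) + z * shT x z (a + 1) b := by
  unfold shT
  rw [Finset.sum_range_succ', Finset.sum_range_succ' _ a, Finset.mul_sum, mul_add, Finset.mul_sum,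
    ← add_assoc, ← Finset.sum_add_distrib]
  congr 1
  · refine Finset.sum_congr rfl fun i _ => ?_
    have : (Nat.choose (b + 1 + (i + 1)) (i + 1) : ℝ)
        = Nat.choose (b + 1 + i) i + Nat.choose (b + (i + 1)) (i + 1) := by
      rw [show b + 1 + (i + 1) = (b + 1 + i) + 1 by ring, Nat.choose_succ_succ,
        show b + (i + 1) = b + 1 + i by ring]
      push_cast; ring
    rw [this]
    simp only [Nat.add_sub_add_right]
    ring
  · simp; ring

lemma shT_main (x y z : ℝ) (h : x * y = z * (x + y)) (a b : ℕ) :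
    x ^ (a + 1) * y ^ (b + 1) = shT x z (a + 1) b + shT y z (b + 1) a := by
  induction a generalizing b with
  | zero =>
    induction b with
    | zero => simp only [shT_succ_zero, shT_zero]; linear_combination h
    | succ b ihb =>
      rw [shT_succ_succ, shT_succ_zero, shT_zero]
      linear_combination z * ihb + y ^ (b + 1) * h
  | succ a iha =>
    induction b with
    | zero =>
      have := iha 0
      rw [shT_succ_zero, shT_succ_succ, shT_zero]
      linear_combination z * this + x ^ (a + 1) * h
    | succ b ihb =>
      have := iha (b + 1)
      rw [shT_succ_succ x, shT_succ_succ y]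
      linear_combination z * this + z * ihb + x ^ (a + 1) * y ^ (b + 1) * h

def shEquiv : ℕ+ × ℕ+ ≃ {q : ℕ+ × ℕ+ // q.1 < q.2} where
  toFun p := ⟨(p.1, p.1 + p.2), PNat.lt_add_right _ _⟩
  invFun q := (q.1.1, q.1.2 - q.1.1)
  left_inv p := by
    ext
    · rfl
    · exact
        (add_left_cancel (PNat.add_sub_of_lt (PNat.lt_add_right p.1 p.2)))
  right_inv q := by
    obtain ⟨⟨m, n⟩, h⟩ := q
    have h' : m < n := h
    simp [PNat.add_sub_of_lt h']

lemma zeta2_eq (a b : ℕ) : zeta2 a b =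
    ∑' p : ℕ+ × ℕ+, ((p.1 : ℝ)⁻¹ ^ a * ((p.1 : ℝ) + p.2)⁻¹ ^ b) := by
  unfold zeta2
  rw [← shEquiv.tsum_eq]
  refine tsum_congr fun p => ?_
  simp [shEquiv, mul_comm]

lemma zeta2_eq' (a b : ℕ) : zeta2 a b =
    ∑' p : ℕ+ × ℕ+, ((p.2 : ℝ)⁻¹ ^ a * ((p.1 : ℝ) + p.2)⁻¹ ^ b) := by
  rw [zeta2_eq, ← (Equiv.prodComm ℕ+ ℕ+).tsum_eq]
  refine tsum_congr fun p => ?_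
  simp [add_comm]

lemma zeta1_summable (k : ℕ) (h : 2 ≤ k) : Summable fun n : ℕ+ => (n : ℝ)⁻¹ ^ k := by
  have := (Real.summable_nat_pow_inv (p := k)).2 (by omega)
  simpa [Function.comp_def] using this.comp_injective PNat.coe_injective

lemma shT_nonneg (x z : ℝ) (hx : 0 ≤ x) (hz : 0 ≤ z) (a b : ℕ) : 0 ≤ shT x z a b :=
  Finset.sum_nonneg fun i _ => by positivity

lemma shT_tsum (f g : ℕ+ × ℕ+ → ℝ) (hf : ∀ p, 0 ≤ f p) (hg : ∀ p, 0 ≤ g p) (a b : ℕ)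
    (hs : Summable fun p => shT (f p) (g p) a b) :
    ∑' p, shT (f p) (g p) a b = ∑ i ∈ Finset.range a, (Nat.choose (b + i) i : ℝ) *
      ∑' p, (f p ^ (a - i) * g p ^ (b + 1 + i)) := by
  simp only [← tsum_mul_left]
  unfold shT
  rw [Summable.tsum_finsetSum]
  intro i hi
  refine Summable.of_nonneg_of_le (fun p => ?_) (fun p => ?_) hs
  · have := hf p
    have := hg p
    positivity
  · unfold shT
    refine Finset.single_le_sum (f := fun i => (Nat.choose (b + i) i : ℝ) *
      (f p ^ (a - i) * g p ^ (b + 1 + i))) (fun j _ => ?_) hi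
    have := hf p
    have := hg p
    positivity

/-- the integral shuffle product formula (Euler decomposition)
`ζ(k₁)·ζ(k₂) = Σ_{i=0}^{k₁−1} C(k₂−1+i,i)·ζ(k₁−i,k₂+i)
             + Σ_{j=0}^{k₂−1} C(k₁−1+j,j)·ζ(k₂−j,k₁+j)` for `k₁, k₂ ≥ 2`. -/
theorem zeta_shuffle (k₁ k₂ : ℕ) (h₁ : 2 ≤ k₁) (h₂ : 2 ≤ k₂) :
    zeta1 k₁ * zeta1 k₂ =
      (∑ i ∈ Finset.range k₁, (Nat.choose (k₂ - 1 + i) i : ℝ) * zeta2 (k₁ - i) (k₂ + i)) +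
      (∑ j ∈ Finset.range k₂, (Nat.choose (k₁ - 1 + j) j : ℝ) * zeta2 (k₂ - j) (k₁ + j)) := by
  have s1 := zeta1_summable k₁ h₁
  have s2 := zeta1_summable k₂ h₂
  have sp : Summable fun p : ℕ+ × ℕ+ => (p.1 : ℝ)⁻¹ ^ k₁ * (p.2 : ℝ)⁻¹ ^ k₂ :=
    s1.mul_of_nonneg s2 (fun _ => by positivity) (fun _ => by positivity)
  have e : zeta1 k₁ * zeta1 k₂ = ∑' p : ℕ+ × ℕ+, (p.1 : ℝ)⁻¹ ^ k₁ * (p.2 : ℝ)⁻¹ ^ k₂ := by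
    unfold zeta1
    simp only [← inv_pow]
    exact s1.tsum_mul_tsum s2 sp
  obtain ⟨a, rfl⟩ : ∃ a, k₁ = a + 1 := ⟨k₁ - 1, by omega⟩
  obtain ⟨b, rfl⟩ : ∃ b, k₂ = b + 1 := ⟨k₂ - 1, by omega⟩
  have key : ∀ p : ℕ+ × ℕ+, (p.1 : ℝ)⁻¹ ^ (a + 1) * (p.2 : ℝ)⁻¹ ^ (b + 1) =
      shT (p.1 : ℝ)⁻¹ ((p.1 : ℝ) + p.2)⁻¹ (a + 1) b +
      shT (p.2 : ℝ)⁻¹ ((p.1 : ℝ) + p.2)⁻¹ (b + 1) a := by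
    intro p
    apply shT_main
    have h1 : (0 : ℝ) < p.1 := by exact_mod_cast p.1.pos
    have h2 : (0 : ℝ) < p.2 := by exact_mod_cast p.2.pos
    field_simp
    ring
  have n1 : ∀ p : ℕ+ × ℕ+, 0 ≤ shT (p.1 : ℝ)⁻¹ ((p.1 : ℝ) + p.2)⁻¹ (a + 1) b :=
    fun p => shT_nonneg _ _ (by positivity) (by positivity) _ _
  have n2 : ∀ p : ℕ+ × ℕ+, 0 ≤ shT (p.2 : ℝ)⁻¹ ((p.1 : ℝ) + p.2)⁻¹ (b + 1) a :=
    fun p => shT_nonneg _ _ (by positivity) (by positivity) _ _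
  have t1 := Summable.of_nonneg_of_le n1 (fun p => by rw [key p]; linarith [n2 p]) sp
  have t2 := Summable.of_nonneg_of_le n2 (fun p => by rw [key p]; linarith [n1 p]) sp
  rw [e, tsum_congr key, t1.tsum_add t2,
    shT_tsum (fun p => (p.1 : ℝ)⁻¹) (fun p => ((p.1 : ℝ) + p.2)⁻¹) (fun _ => by positivity)
      (fun _ => by positivity) _ _ t1,
    shT_tsum (fun p => (p.2 : ℝ)⁻¹) (fun p => ((p.1 : ℝ) + p.2)⁻¹) (fun _ => by positivity)
      (fun _ => by positivity) _ _ t2]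
  congr 1
  · simp only [zeta2_eq, Nat.add_sub_cancel]
  · simp only [zeta2_eq', Nat.add_sub_cancel]
end

section
/- Let k₁, k₂ be integers with k₁ ≥ 2 and k₂ ≥ 2. Then the simplest double shuffle relation holds: ζ(k₁,k₂) + ζ(k₂,k₁) + ζ(k₁+k₂) = Σ_{i=0}^{k₁−1} C(k₂−1+i, i)·ζ(k₁−i, k₂+i) + Σ_{j=0}^{k₂−1} C(k₁−1+j, j)·ζ(k₂−j, k₁+j), where C(·,·) denotes the binomial coefficient. -/
noncomputable def auxS (T X : ℝ) (a b : ℕ) : ℝ :=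
  ∑ i ∈ Finset.range a, (Nat.multichoose b i : ℝ) * (X ^ (a - i) * T ^ (b + i))

lemma auxS_zero_left (T X : ℝ) (b : ℕ) : auxS T X 0 b = 0 := by simp [auxS]

lemma auxS_zero_right (T X : ℝ) (a : ℕ) : auxS T X (a + 1) 0 = X ^ (a + 1) := by
  unfold auxS
  rw [Finset.sum_range_succ']
  simp

lemma auxS_succ (T X : ℝ) (a b : ℕ) :
    auxS T X (a + 1) (b + 1) = T * (auxS T X a (b + 1) + auxS T X (a + 1) b) := by
  unfold auxS
  rw [Finset.sum_range_succ' _ a, Finset.sum_range_succ' _ a, ← add_assoc, ← Finset.sum_add_distrib,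
    mul_add, Finset.mul_sum]
  congr 1
  · apply Finset.sum_congr rfl
    intro i _
    rw [Nat.multichoose_succ_succ, Nat.add_sub_add_right]
    push_cast
    ring
  · simp
    ring

lemma aux_pf (T X Y : ℝ) (h : X * Y = T * (X + Y)) (n : ℕ) : ∀ a b : ℕ, a + b = n + 1 →
    X ^ a * Y ^ b = auxS T X a b + auxS T Y b a := by
  induction n with
  | zero =>
    intro a b hab
    obtain ⟨rfl, rfl⟩ | ⟨rfl, rfl⟩ : (a = 0 ∧ b = 1) ∨ (a = 1 ∧ b = 0) := by omega
    · simp [auxS]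
    · simp [auxS]
  | succ n ih =>
    intro a b hab
    rcases a with _ | a
    · rcases b with _ | b
      · omega
      · rw [auxS_zero_left, auxS_zero_right]; simp
    · rcases b with _ | b
      · rw [auxS_zero_left, auxS_zero_right]; simp
      · rw [auxS_succ, auxS_succ]
        have e1 := ih a (b + 1) (by omega)
        have e2 := ih (a + 1) b (by omega)
        have : X ^ (a + 1) * Y ^ (b + 1) = T * (X ^ a * Y ^ (b + 1) + X ^ (a + 1) * Y ^ b) := by
          linear_combination (X ^ a * Y ^ b) * h
        rw [this, e1, e2]
        ring

/-- summand of the shifted double zeta -/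
noncomputable def auxg (a b : ℕ) (p : ℕ+ × ℕ+) : ℝ :=
  ((p.1 : ℝ)⁻¹) ^ a * (((p.1 : ℝ) + p.2)⁻¹) ^ b

def auxEquiv : ℕ+ × ℕ+ ≃ {q : ℕ+ × ℕ+ // q.1 < q.2} where
  toFun p := ⟨(p.1, p.1 + p.2), PNat.lt_add_right p.1 p.2⟩
  invFun q := (q.1.1, q.1.2 - q.1.1)
  left_inv p := by
    refine Prod.ext rfl ?_
    exact add_left_cancel (PNat.add_sub_of_lt (PNat.lt_add_right p.1 p.2))
  right_inv q := by
    obtain ⟨⟨a, b⟩, h⟩ := q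
    apply Subtype.ext
    exact Prod.ext rfl (PNat.add_sub_of_lt h)

lemma zeta2_eq_s7 (a b : ℕ) : zeta2 a b = ∑' p, auxg a b p := by
  unfold zeta2
  rw [← auxEquiv.tsum_eq]
  apply tsum_congr
  intro p
  simp [auxEquiv, auxg, mul_comm]

noncomputable def auxf (a b : ℕ) (p : ℕ+ × ℕ+) : ℝ := ((p.1 : ℝ)⁻¹) ^ a * ((p.2 : ℝ)⁻¹) ^ b

lemma auxf_summable {a b : ℕ} (ha : 2 ≤ a) (hb : 2 ≤ b) : Summable (auxf a b) := by
  have key : ∀ k : ℕ, 2 ≤ k → Summable (fun n : ℕ+ => ((n : ℝ)⁻¹) ^ k) := by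
    intro k hk
    have := (Real.summable_nat_pow_inv (p := k)).2 (by omega)
    have h2 := this.comp_injective PNat.coe_injective
    refine h2.congr ?_
    intro n
    simp
  exact (key a ha).mul_of_nonneg (key b hb) (fun n => by positivity) (fun n => by positivity)

lemma auxf_eq {a b : ℕ} (ha : 2 ≤ a) (p : ℕ+ × ℕ+) :
    auxf a b p = (∑ i ∈ Finset.range a, (Nat.multichoose b i : ℝ) * auxg (a - i) (b + i) p)
      + ∑ j ∈ Finset.range b, (Nat.multichoose a j : ℝ) * auxg (b - j) (a + j) p.swap := by
  have hx : (0 : ℝ) < p.1 := by exact_mod_cast p.1.pos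
  have hy : (0 : ℝ) < p.2 := by exact_mod_cast p.2.pos
  have := aux_pf (((p.1 : ℝ) + p.2)⁻¹) ((p.1 : ℝ)⁻¹) ((p.2 : ℝ)⁻¹)
    (by field_simp; ring) (a + b - 1) a b (by omega)
  simp only [auxf, auxg, this, auxS, Prod.fst_swap, Prod.snd_swap, add_comm (p.2 : ℝ)]

lemma auxg_nonneg (a b : ℕ) (p : ℕ+ × ℕ+) : 0 ≤ auxg a b p := by
  unfold auxg; positivity

lemma auxg_summable {a b : ℕ} (ha : 2 ≤ a) (hb : 2 ≤ b) {i : ℕ} (hi : i < a) :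
    Summable (auxg (a - i) (b + i)) := by
  refine Summable.of_nonneg_of_le (auxg_nonneg _ _) (fun p => ?_) (auxf_summable ha hb)
  rw [auxf_eq ha]
  have h1 : (1 : ℝ) ≤ Nat.multichoose b i := by
    rw [Nat.multichoose_eq]
    exact_mod_cast Nat.choose_pos (by omega)
  have h2 : auxg (a - i) (b + i) p ≤ Nat.multichoose b i * auxg (a - i) (b + i) p :=
    le_mul_of_one_le_left (auxg_nonneg _ _ _) h1
  have h3 := Finset.single_le_sum (s := Finset.range a)
    (f := fun i => (Nat.multichoose b i : ℝ) * auxg (a - i) (b + i) p)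
    (fun i _ => mul_nonneg (Nat.cast_nonneg _) (auxg_nonneg _ _ _)) (Finset.mem_range.2 hi)
  have h4 : 0 ≤ ∑ j ∈ Finset.range b, (Nat.multichoose a j : ℝ) * auxg (b - j) (a + j) p.swap :=
    Finset.sum_nonneg (fun i _ => mul_nonneg (Nat.cast_nonneg _) (auxg_nonneg _ _ _))
  linarith

lemma tsum_auxf_right {a b : ℕ} (ha : 2 ≤ a) (hb : 2 ≤ b) : ∑' p, auxf a b p =
    (∑ i ∈ Finset.range a, (Nat.multichoose b i : ℝ) * zeta2 (a - i) (b + i))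
      + ∑ j ∈ Finset.range b, (Nat.multichoose a j : ℝ) * zeta2 (b - j) (a + j) := by
  have H : HasSum (auxf a b) ((∑ i ∈ Finset.range a, (Nat.multichoose b i : ℝ) * zeta2 (a - i) (b + i))
      + ∑ j ∈ Finset.range b, (Nat.multichoose a j : ℝ) * zeta2 (b - j) (a + j)) := by
    rw [funext (auxf_eq (b := b) ha)]
    apply HasSum.add
    · apply hasSum_sum
      intro i hi
      rw [zeta2_eq_s7]
      exact (auxg_summable ha hb (Finset.mem_range.1 hi)).hasSum.mul_left _
    · apply hasSum_sum
      intro i hi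
      rw [zeta2_eq_s7]
      have := (auxg_summable hb ha (Finset.mem_range.1 hi)).hasSum.mul_left (Nat.multichoose a i : ℝ)
      exact (Equiv.prodComm ℕ+ ℕ+).hasSum_iff.2 this
  exact H.tsum_eq

lemma tsum_auxf_left {a b : ℕ} (ha : 2 ≤ a) (hb : 2 ≤ b) : ∑' p, auxf a b p =
    zeta2 a b + zeta2 b a + zeta1 (a + b) := by
  have hs := auxf_summable ha hb
  have e1 : ∀ a b, zeta2 a b = ∑' p, {q : ℕ+ × ℕ+ | q.1 < q.2}.indicator (auxf a b) p := by
    intro a b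
    rw [← tsum_subtype]
    unfold zeta2
    apply tsum_congr
    intro p
    simp [auxf, mul_comm]
  have e2 : zeta2 b a = ∑' p, {q : ℕ+ × ℕ+ | q.2 < q.1}.indicator (auxf a b) p := by
    rw [e1, ← (Equiv.prodComm ℕ+ ℕ+).tsum_eq]
    apply tsum_congr
    intro p
    simp [Set.indicator_apply, auxf, mul_comm]
  have e3 : zeta1 (a + b) = ∑' p, {q : ℕ+ × ℕ+ | q.1 = q.2}.indicator (auxf a b) p := by
    let e : ℕ+ ≃ {q : ℕ+ × ℕ+ | q.1 = q.2} :=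
      { toFun := fun n => ⟨(n, n), rfl⟩
        invFun := fun q => q.1.1
        left_inv := fun n => rfl
        right_inv := fun q => Subtype.ext (Prod.ext rfl q.2) }
    rw [← tsum_subtype, ← e.tsum_eq]
    unfold zeta1
    apply tsum_congr
    intro n
    simp [e, auxf, pow_add, mul_comm]
  rw [e1 a b, e2, e3, ← (hs.indicator _).tsum_add (hs.indicator _),
    ← ((hs.indicator _).add (hs.indicator _)).tsum_add (hs.indicator _)]
  apply tsum_congr
  intro p
  rcases lt_trichotomy p.1 p.2 with h | h | h
  · simp [Set.indicator_apply, h, h.not_gt, h.ne]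
  · simp [Set.indicator_apply, h]
  · simp [Set.indicator_apply, h, h.not_gt, h.ne']

/-- the simplest double shuffle relation
`ζ(k₁,k₂) + ζ(k₂,k₁) + ζ(k₁+k₂)
  = Σ_{i=0}^{k₁−1} C(k₂−1+i,i)·ζ(k₁−i,k₂+i)
  + Σ_{j=0}^{k₂−1} C(k₁−1+j,j)·ζ(k₂−j,k₁+j)` for `k₁, k₂ ≥ 2`. -/
theorem zeta_double_shuffle (k₁ k₂ : ℕ) (h₁ : 2 ≤ k₁) (h₂ : 2 ≤ k₂) :
    zeta2 k₁ k₂ + zeta2 k₂ k₁ + zeta1 (k₁ + k₂) =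
      (∑ i ∈ Finset.range k₁, (Nat.choose (k₂ - 1 + i) i : ℝ) * zeta2 (k₁ - i) (k₂ + i)) +
      (∑ j ∈ Finset.range k₂, (Nat.choose (k₁ - 1 + j) j : ℝ) * zeta2 (k₂ - j) (k₁ + j)) := by
  rw [← tsum_auxf_left h₁ h₂, tsum_auxf_right h₁ h₂]
  congr 1
  · apply Finset.sum_congr rfl
    intro i _
    rw [Nat.multichoose_eq, show k₂ + i - 1 = k₂ - 1 + i by omega]
  · apply Finset.sum_congr rfl
    intro i _
    rw [Nat.multichoose_eq, show k₁ + i - 1 = k₁ - 1 + i by omega]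
end
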